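/- For every integer n ≥ 3, there exist a finite index set I, and for each i ∈ I nonnegative integers j₁ⁱ, j₂ⁱ, j₃ⁱ with j₁ⁱ + j₂ⁱ + j₃ⁱ = n − 3 and complex numbers a₁ⁱ, b₁ⁱ, a₂ⁱ, b₂ⁱ, a₃ⁱ, b₃ⁱ, such that for every smooth complex-valued 2π-periodic function u with zero mean: ∫₀^{2π} w_n^C(u) dx = Σ_{i∈I} ∫₀^{2π} ((a₁ⁱ + b₁ⁱH)∂ₓ^{j₁ⁱ} u)·((a₂ⁱ + b₂ⁱH)∂ₓ^{j₂ⁱ} u)·((a₃ⁱ + b₃ⁱH)∂ₓ^{j₃ⁱ} u) dx. -/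

import Mathlib

/-- `n`-th Fourier coefficient of a `2π`-periodic function. -/
noncomputable def fourierCoef (f : ℝ → ℂ) (n : ℤ) : ℂ :=
  (1 / (2 * Real.pi)) * ∫ x in (0:ℝ)..(2 * Real.pi), f x * Complex.exp (-Complex.I * n * x)

/-- Projection `P₋` onto negative Fourier modes (via the Fourier series). -/
noncomputable def Pminus (f : ℝ → ℂ) : ℝ → ℂ :=
  fun x => ∑' n : ℤ, if n < 0 then fourierCoef f n * Complex.exp (Complex.I * n * x) else 0

/-- The Matsuno densities: `w₁(u) = u` and for `n ≥ 2`
`wₙ(u) = i·P₋∂ₓ w_{n-1}(u) − Σ_{k=2}^n ((−1)^{k+1}/k!)·Σ_{j₁+⋯+j_k=n, jᵢ≥1} w_{j₁}(u)⋯w_{j_k}(u)`. -/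
noncomputable def matsunoW (u : ℝ → ℂ) : ℕ → ℝ → ℂ := fun n =>
  Nat.strongRecOn n fun n prev =>
    if n = 0 then fun _ => 0
    else if n = 1 then u
    else
      let W : ℕ → ℝ → ℂ := fun m => if hm : m < n then prev m hm else fun _ => 0
      fun x =>
        Complex.I * Pminus (deriv (W (n - 1))) x -
          ∑ k ∈ Finset.Icc 2 n, ((-1 : ℂ) ^ (k + 1) / (Nat.factorial k : ℂ)) *
            ∑ j ∈ (Finset.Nat.antidiagonalTuple k n).filter (fun j => ∀ i, 1 ≤ j i),
              ∏ i, W (j i) x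

/-- The Hilbert transform `H(e^{inx}) = -i·sgn(n)·e^{inx}` (via the Fourier series). -/
noncomputable def HilbT (f : ℝ → ℂ) : ℝ → ℂ :=
  fun x => ∑' n : ℤ, (-Complex.I * (n.sign : ℂ)) * fourierCoef f n *
    Complex.exp (Complex.I * n * x)

/-- The operator `Λ^j = (c₁ + c₂·H)∂ₓ^j`. -/
noncomputable def Lam (c₁ c₂ : ℂ) (j : ℕ) (u : ℝ → ℂ) : ℝ → ℂ :=
  fun x => c₁ * deriv^[j] u x + c₂ * HilbT (deriv^[j] u) x

/-- The cubic part `w_n^C(u) = (1/6)·(d³/dt³)|_{t=0} wₙ(tu)`. -/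
noncomputable def wCub (u : ℝ → ℂ) (n : ℕ) (x : ℝ) : ℂ :=
  iteratedDeriv 3 (fun t : ℝ => matsunoW (fun y => (t : ℂ) * u y) n x) 0 / 6


/-- The algebra of smooth complex-valued `2π`-periodic functions. -/
def smoothPeriodic : Subalgebra ℂ (ℝ → ℂ) where
  carrier := {f | ContDiff ℝ (⊤ : ℕ∞) f ∧ Function.Periodic f (2 * Real.pi)}
  mul_mem' hf hg := ⟨hf.1.mul hg.1, hf.2.mul hg.2⟩
  add_mem' hf hg := ⟨hf.1.add hg.1, hf.2.add hg.2⟩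
  algebraMap_mem' _ := ⟨contDiff_const, fun _ => rfl⟩

/-- The character `x ↦ e^{inx}`. -/
noncomputable def expChar (n : ℤ) (x : ℝ) : ℂ := Complex.exp (Complex.I * n * x)

lemma hasDerivAt_expChar (n : ℤ) (x : ℝ) :
    HasDerivAt (expChar n) (Complex.I * n * expChar n x) x := by
  have h : HasDerivAt (fun y : ℝ => Complex.I * n * (y : ℂ)) (Complex.I * n) x := by
    simpa using (Complex.ofRealCLM.hasDerivAt (x := x)).const_mul (Complex.I * (n : ℂ))
  exact h.cexp.congr_deriv (mul_comm _ _)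

lemma norm_expChar (n : ℤ) (x : ℝ) : ‖expChar n x‖ = 1 := by
  have : Complex.I * n * x = ((n * x : ℝ) : ℂ) * Complex.I := by push_cast; ring
  rw [expChar, this, Complex.norm_exp_ofReal_mul_I]

lemma expChar_add (m n : ℤ) (x : ℝ) : expChar (m + n) x = expChar m x * expChar n x := by
  rw [expChar, expChar, expChar, ← Complex.exp_add]
  push_cast
  ring_nf

lemma expChar_zero (x : ℝ) : expChar 0 x = 1 := by simp [expChar]

lemma expChar_mem (n : ℤ) : expChar n ∈ smoothPeriodic := by
  refine ⟨?_, fun x => ?_⟩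
  · have h : ContDiff ℝ (⊤ : ℕ∞) fun x : ℝ => (x : ℂ) := Complex.ofRealCLM.contDiff
    exact (contDiff_const.mul h).cexp
  · rw [expChar, expChar, Complex.exp_eq_exp_iff_exists_int]
    exact ⟨n, by push_cast; ring⟩

lemma continuous_expChar (n : ℤ) : Continuous (expChar n) := (expChar_mem n).1.continuous

lemma fourierCoef_eq (f : ℝ → ℂ) (n : ℤ) :
    fourierCoef f n =
      (1 / (2 * Real.pi)) * ∫ x in (0:ℝ)..(2 * Real.pi), f x * expChar (-n) x := by
  simp [fourierCoef, expChar]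

lemma integral_expChar (n : ℤ) :
    ∫ x in (0:ℝ)..(2 * Real.pi), expChar n x = if n = 0 then 2 * (Real.pi : ℂ) else 0 := by
  split_ifs with h
  · simp [h, expChar_zero]
  · have h0 : Complex.I * (n : ℂ) ≠ 0 := mul_ne_zero Complex.I_ne_zero (by exact_mod_cast h)
    have h1 : expChar n (2 * Real.pi) = expChar n 0 := by
      simpa using (expChar_mem n).2 0
    simp only [expChar] at h1 ⊢
    rw [integral_exp_mul_complex h0, h1, sub_self, zero_div]

lemma two_pi_ne_zero : (2 * (Real.pi : ℂ)) ≠ 0 := by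
  exact_mod_cast Real.two_pi_pos.ne'

lemma fourierCoef_add {f g : ℝ → ℂ} (hf : Continuous f) (hg : Continuous g) (n : ℤ) :
    fourierCoef (f + g) n = fourierCoef f n + fourierCoef g n := by
  have h := continuous_expChar (-n)
  simp only [fourierCoef_eq, Pi.add_apply, add_mul]
  rw [← mul_add]
  congr 1
  exact intervalIntegral.integral_add ((hf.mul h).intervalIntegrable _ _)
    ((hg.mul h).intervalIntegrable _ _)

lemma fourierCoef_smul (c : ℂ) (f : ℝ → ℂ) (n : ℤ) :
    fourierCoef (c • f) n = c * fourierCoef f n := by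
  simp only [fourierCoef_eq, Pi.smul_apply, smul_eq_mul, mul_assoc]
  rw [intervalIntegral.integral_const_mul]
  ring

lemma differentiable_of_mem {f : ℝ → ℂ} (hf : f ∈ smoothPeriodic) : Differentiable ℝ f :=
  (contDiff_infty_iff_deriv.1 hf.1).1

lemma deriv_mem {f : ℝ → ℂ} (hf : f ∈ smoothPeriodic) : deriv f ∈ smoothPeriodic := by
  refine ⟨(contDiff_infty_iff_deriv.1 hf.1).2, fun x => ?_⟩
  rw [← deriv_comp_add_const, funext hf.2]

lemma fourierCoef_deriv {f : ℝ → ℂ} (hf : f ∈ smoothPeriodic) (n : ℤ) :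
    fourierCoef (deriv f) n = Complex.I * n * fourierCoef f n := by
  have h := intervalIntegral.integral_mul_deriv_eq_deriv_mul (a := 0) (b := 2 * Real.pi)
    (fun x _ => hasDerivAt_expChar (-n) x)
    (fun x _ => (differentiable_of_mem hf x).hasDerivAt)
    ((continuous_const.mul (continuous_expChar (-n))).intervalIntegrable _ _)
    ((deriv_mem hf).1.continuous.intervalIntegrable _ _)
  have h1 : expChar (-n) (2 * Real.pi) = expChar (-n) 0 := by
    simpa using (expChar_mem (-n)).2 0
  have h2 : f (2 * Real.pi) = f 0 := by simpa using hf.2 0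
  rw [h1, h2, sub_self, zero_sub] at h
  simp only [mul_assoc, intervalIntegral.integral_const_mul] at h
  simp only [fourierCoef_eq, mul_comm _ (expChar (-n) _)]
  rw [h]
  push_cast
  ring

lemma norm_fourierCoef_bounded {f : ℝ → ℂ} (hf : Continuous f) :
    ∃ C, ∀ n, ‖fourierCoef f n‖ ≤ C := by
  obtain ⟨C, hC⟩ := (isCompact_uIcc (a := (0:ℝ)) (b := 2 * Real.pi)).exists_bound_of_continuousOn
    hf.continuousOn
  refine ⟨‖(1 / (2 * Real.pi) : ℂ)‖ * (C * |2 * Real.pi - 0|), fun n => ?_⟩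
  rw [fourierCoef_eq, norm_mul]
  gcongr
  refine intervalIntegral.norm_integral_le_of_norm_le_const fun x hx => ?_
  rw [norm_mul, norm_expChar, mul_one]
  exact hC x (Set.uIoc_subset_uIcc hx)

lemma summable_norm_fourierCoef {f : ℝ → ℂ} (hf : f ∈ smoothPeriodic) :
    Summable fun n => ‖fourierCoef f n‖ := by
  obtain ⟨C, hC⟩ := norm_fourierCoef_bounded (deriv_mem (deriv_mem hf)).1.continuous
  refine Summable.of_norm_bounded_eventually
    ((Real.summable_one_div_int_pow.2 one_lt_two).mul_left C) ?_
  filter_upwards [(Set.finite_singleton (0 : ℤ)).compl_mem_cofinite] with n hn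
  have hn0 : (0:ℝ) < (n:ℝ) ^ 2 := by
    have : (n : ℝ) ≠ 0 := by exact_mod_cast hn
    positivity
  have := hC n
  rw [fourierCoef_deriv (deriv_mem hf), fourierCoef_deriv hf] at this
  simp only [norm_mul, Complex.norm_I, one_mul, Complex.norm_intCast] at this
  rw [norm_norm, mul_one_div, le_div_iff₀ hn0]
  rw [← sq_abs]
  linarith

lemma hasSum_fourierCoef {f : ℝ → ℂ} (hf : f ∈ smoothPeriodic) (x : ℝ) :
    HasSum (fun n => fourierCoef f n * expChar n x) (f x) := by
  have : Fact (0 < 2 * Real.pi) := ⟨Real.two_pi_pos⟩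
  have hper : Function.Periodic f (2 * Real.pi) := hf.2
  let F : C(AddCircle (2 * Real.pi), ℂ) :=
    ⟨hper.lift, continuous_coinduced_dom.2 hf.1.continuous⟩
  have hexp (n : ℤ) (y : ℝ) : fourier n (y : AddCircle (2 * Real.pi)) = expChar n y := by
    rw [fourier_coe_apply, expChar]
    congr 1
    push_cast
    field_simp [two_pi_ne_zero]
  have hco (n : ℤ) : fourierCoeff F n = fourierCoef f n := by
    rw [fourierCoeff_eq_intervalIntegral _ _ 0, fourierCoef_eq, zero_add]
    simp only [hexp, smul_eq_mul]
    simp [F, mul_comm]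
  have := has_pointwise_sum_fourier_series_of_summable (f := F)
    ((summable_norm_fourierCoef hf).of_norm.congr fun n => (hco n).symm) (x : AddCircle _)
  have hFx : F (x : AddCircle (2 * Real.pi)) = f x := rfl
  simpa only [hco, hexp, smul_eq_mul, hFx] using this

/-- The Fourier multiplier with symbol `m`. -/
noncomputable def fourierMult (m : ℤ → ℂ) (f : ℝ → ℂ) (x : ℝ) : ℂ :=
  ∑' n : ℤ, m n * fourierCoef f n * expChar n x

section fourierMult

variable {m : ℤ → ℂ} {f : ℝ → ℂ}

lemma norm_fourierMult_term_le (hm : ∀ n, ‖m n‖ ≤ 1) (n : ℤ) (x : ℝ) :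
    ‖m n * fourierCoef f n * expChar n x‖ ≤ ‖fourierCoef f n‖ := by
  rw [norm_mul, norm_mul, norm_expChar, mul_one]
  exact mul_le_of_le_one_left (norm_nonneg _) (hm n)

lemma hasDerivAt_fourierMult (hm : ∀ n, ‖m n‖ ≤ 1) (hf : f ∈ smoothPeriodic) (x : ℝ) :
    HasDerivAt (fourierMult m f) (fourierMult m (deriv f) x) x := by
  refine hasDerivAt_tsum (summable_norm_fourierCoef (deriv_mem hf)) (fun n y => ?_)
    (fun n y => norm_fourierMult_term_le hm n y) (y₀ := x) ?_ x
  · rw [fourierCoef_deriv hf]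
    exact ((hasDerivAt_expChar n y).const_mul (m n * fourierCoef f n)).congr_deriv (by ring)
  · exact .of_norm_bounded (summable_norm_fourierCoef hf)
      fun n => norm_fourierMult_term_le hm n x

lemma deriv_fourierMult (hm : ∀ n, ‖m n‖ ≤ 1) (hf : f ∈ smoothPeriodic) :
    deriv (fourierMult m f) = fourierMult m (deriv f) :=
  funext fun x => (hasDerivAt_fourierMult hm hf x).deriv

lemma fourierMult_mem (hm : ∀ n, ‖m n‖ ≤ 1) (hf : f ∈ smoothPeriodic) :
    fourierMult m f ∈ smoothPeriodic := by
  refine ⟨contDiff_infty.2 fun k => ?_, fun x => ?_⟩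
  · induction k generalizing f with
    | zero =>
      exact contDiff_zero.2
        (continuous_iff_continuousAt.2 fun x => (hasDerivAt_fourierMult hm hf x).continuousAt)
    | succ k ih =>
      push_cast
      rw [contDiff_succ_iff_deriv, deriv_fourierMult hm hf]
      exact ⟨fun x => (hasDerivAt_fourierMult hm hf x).differentiableAt, by simp,
        ih (deriv_mem hf)⟩
  · simp only [fourierMult, (expChar_mem _).2 x]

lemma integral_fourierMult_mul (hm : ∀ n, ‖m n‖ ≤ 1) (hf : f ∈ smoothPeriodic)
    {g : ℝ → ℂ} (hg : Continuous g) :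
    ∫ x in (0:ℝ)..(2 * Real.pi), fourierMult m f x * g x
      = ∑' n, m n * fourierCoef f n * (2 * Real.pi * fourierCoef g (-n)) := by
  obtain ⟨C, hC⟩ := (isCompact_uIcc (a := (0:ℝ)) (b := 2 * Real.pi)).exists_bound_of_continuousOn
    hg.continuousOn
  have hC0 : 0 ≤ C := (norm_nonneg _).trans (hC 0 Set.left_mem_uIcc)
  have key := intervalIntegral.hasSum_integral_of_dominated_convergence (a := 0)
    (b := 2 * Real.pi) (μ := MeasureTheory.volume)
    (F := fun n x => m n * fourierCoef f n * expChar n x * g x)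
    (f := fun x => fourierMult m f x * g x) (fun n _ => ‖fourierCoef f n‖ * C)
    (fun n => ((continuous_const.mul (continuous_expChar n)).mul hg).aestronglyMeasurable)
    (fun n => .of_forall fun x hx => ?_)
    (.of_forall fun x _ => (summable_norm_fourierCoef hf).mul_right C)
    (by simp) (.of_forall fun x _ => ?_)
  · rw [← key.tsum_eq]
    refine tsum_congr fun n => ?_
    have hpi := two_pi_ne_zero
    simp only [mul_assoc, intervalIntegral.integral_const_mul, fourierCoef_eq (f := g), neg_neg,
      mul_comm (g _)]
    field_simp
  · rw [norm_mul]
    gcongr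
    · exact norm_fourierMult_term_le hm n x
    · exact hC x (Set.uIoc_subset_uIcc hx)
  · exact (Summable.of_norm_bounded (summable_norm_fourierCoef hf)
      fun n => norm_fourierMult_term_le hm n x).hasSum.mul_right _

lemma fourierCoef_expChar (n k : ℤ) : fourierCoef (expChar n) k = if n = k then 1 else 0 := by
  have hpi := two_pi_ne_zero
  simp only [fourierCoef_eq, ← expChar_add, integral_expChar, ← sub_eq_add_neg, sub_eq_zero]
  split_ifs
  · field_simp
  · simp

lemma fourierCoef_fourierMult (hm : ∀ n, ‖m n‖ ≤ 1) (hf : f ∈ smoothPeriodic) (n : ℤ) :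
    fourierCoef (fourierMult m f) n = m n * fourierCoef f n := by
  have hpi := two_pi_ne_zero
  rw [fourierCoef_eq, integral_fourierMult_mul hm hf (continuous_expChar (-n)),
    tsum_eq_single n]
  · rw [fourierCoef_expChar, if_pos rfl]
    field_simp
  · intro k hk
    rw [fourierCoef_expChar, if_neg (by simpa using hk.symm)]
    simp

lemma fourierMult_adjoint (hm : ∀ n, ‖m n‖ ≤ 1) (hf : f ∈ smoothPeriodic)
    {g : ℝ → ℂ} (hg : g ∈ smoothPeriodic) :
    ∫ x in (0:ℝ)..(2 * Real.pi), f x * fourierMult m g x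
      = ∫ x in (0:ℝ)..(2 * Real.pi), fourierMult (fun n => m (-n)) f x * g x := by
  simp only [mul_comm (f _)]
  rw [integral_fourierMult_mul hm hg hf.1.continuous,
    integral_fourierMult_mul (fun n => hm (-n)) hf hg.1.continuous, ← (Equiv.neg ℤ).tsum_eq]
  refine tsum_congr fun n => ?_
  simp only [Equiv.neg_apply, neg_neg]
  ring

end fourierMult

lemma eq_of_fourierCoef_eq {f g : ℝ → ℂ} (hf : f ∈ smoothPeriodic) (hg : g ∈ smoothPeriodic)
    (h : ∀ n, fourierCoef f n = fourierCoef g n) : f = g := by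
  funext x
  have h1 := hasSum_fourierCoef hf x
  simp only [h] at h1
  exact h1.unique (hasSum_fourierCoef hg x)

namespace smoothPeriodic

lemma ext_fourierCoef {f g : smoothPeriodic} (h : ∀ n, fourierCoef f n = fourierCoef g n) :
    f = g :=
  Subtype.ext (eq_of_fourierCoef_eq f.2 g.2 h)

lemma fourierCoef_coe_add (f g : smoothPeriodic) (n : ℤ) :
    fourierCoef (f + g : smoothPeriodic) n = fourierCoef f n + fourierCoef g n :=
  fourierCoef_add f.2.1.continuous g.2.1.continuous n

lemma fourierCoef_coe_smul (c : ℂ) (f : smoothPeriodic) (n : ℤ) :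
    fourierCoef (c • f : smoothPeriodic) n = c * fourierCoef f n :=
  fourierCoef_smul c f n

/-- Differentiation on smooth periodic functions. -/
noncomputable def derivL : smoothPeriodic →ₗ[ℂ] smoothPeriodic where
  toFun f := ⟨deriv f, deriv_mem f.2⟩
  map_add' f g := Subtype.ext <| funext fun x =>
    deriv_add (differentiable_of_mem f.2 x) (differentiable_of_mem g.2 x)
  map_smul' c f := Subtype.ext <| funext fun x =>
    deriv_const_smul c (differentiable_of_mem f.2 x)

lemma coe_derivL (f : smoothPeriodic) : (derivL f : ℝ → ℂ) = deriv f := rfl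

lemma coe_iterate_derivL (j : ℕ) (f : smoothPeriodic) :
    (derivL^[j] f : ℝ → ℂ) = deriv^[j] f := by
  induction j with
  | zero => rfl
  | succ j ih => rw [Function.iterate_succ_apply', Function.iterate_succ_apply', ← ih, coe_derivL]

lemma fourierCoef_derivL (f : smoothPeriodic) (n : ℤ) :
    fourierCoef (derivL f) n = Complex.I * n * fourierCoef f n :=
  fourierCoef_deriv f.2 n

lemma fourierCoef_iterate_derivL (j : ℕ) (f : smoothPeriodic) (n : ℤ) :
    fourierCoef (derivL^[j] f) n = (Complex.I * n) ^ j * fourierCoef f n := by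
  induction j with
  | zero => simp
  | succ j ih => rw [Function.iterate_succ_apply', fourierCoef_derivL, ih]; ring

lemma derivL_mul (f g : smoothPeriodic) : derivL (f * g) = derivL f * g + f * derivL g :=
  Subtype.ext <| funext fun x =>
    deriv_mul (differentiable_of_mem f.2 x) (differentiable_of_mem g.2 x)

/-- The Fourier multiplier with symbol `m` on smooth periodic functions. -/
noncomputable def multL (m : ℤ → ℂ) (hm : ∀ n, ‖m n‖ ≤ 1) :
    smoothPeriodic →ₗ[ℂ] smoothPeriodic where
  toFun f := ⟨fourierMult m f, fourierMult_mem hm f.2⟩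
  map_add' f g := ext_fourierCoef fun n => by
    rw [fourierCoef_coe_add, fourierCoef_fourierMult hm f.2, fourierCoef_fourierMult hm g.2,
      fourierCoef_fourierMult hm (f + g).2, fourierCoef_coe_add, mul_add]
  map_smul' c f := ext_fourierCoef fun n => by
    rw [RingHom.id_apply, fourierCoef_coe_smul, fourierCoef_fourierMult hm f.2,
      fourierCoef_fourierMult hm (c • f).2, fourierCoef_coe_smul, mul_left_comm]

lemma fourierCoef_multL (m : ℤ → ℂ) (hm : ∀ n, ‖m n‖ ≤ 1) (f : smoothPeriodic) (n : ℤ) :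
    fourierCoef (multL m hm f) n = m n * fourierCoef f n :=
  fourierCoef_fourierMult hm f.2 n

/-- Integration over one period. -/
noncomputable def integralL : smoothPeriodic →ₗ[ℂ] ℂ where
  toFun f := ∫ x in (0:ℝ)..(2 * Real.pi), (f : ℝ → ℂ) x
  map_add' f g := intervalIntegral.integral_add (f.2.1.continuous.intervalIntegrable _ _)
    (g.2.1.continuous.intervalIntegrable _ _)
  map_smul' c _ := intervalIntegral.integral_smul c _

lemma integralL_apply (f : smoothPeriodic) :
    integralL f = ∫ x in (0:ℝ)..(2 * Real.pi), (f : ℝ → ℂ) x := rfl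

lemma integralL_eq (f : smoothPeriodic) : integralL f = 2 * Real.pi * fourierCoef f 0 := by
  have hpi := two_pi_ne_zero
  rw [fourierCoef_eq]
  simp only [neg_zero, expChar_zero, mul_one, integralL_apply]
  field_simp

lemma integralL_derivL_mul (f g : smoothPeriodic) :
    integralL (derivL f * g) = -integralL (f * derivL g) := by
  rw [eq_neg_iff_add_eq_zero, ← map_add, ← derivL_mul, integralL_eq, fourierCoef_derivL]
  simp

/-- The projection onto negative Fourier modes. -/
noncomputable def projNeg : smoothPeriodic →ₗ[ℂ] smoothPeriodic :=
  multL (fun n => if n < 0 then 1 else 0) fun n => by split_ifs <;> simp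

/-- The projection onto positive Fourier modes. -/
noncomputable def projPos : smoothPeriodic →ₗ[ℂ] smoothPeriodic :=
  multL (fun n => if -n < 0 then 1 else 0) fun n => by split_ifs <;> simp

/-- The Hilbert transform on smooth periodic functions. -/
noncomputable def hilbert : smoothPeriodic →ₗ[ℂ] smoothPeriodic :=
  multL (fun n => -Complex.I * (n.sign : ℂ)) fun n => by
    rcases lt_trichotomy n 0 with h | h | h
    · simp [Int.sign_eq_neg_one_of_neg h]
    · simp [h]
    · simp [Int.sign_eq_one_of_pos h]

lemma coe_projNeg (f : smoothPeriodic) : (projNeg f : ℝ → ℂ) = Pminus f := by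
  funext x
  refine tsum_congr fun n => ?_
  simp only [ite_mul, one_mul, zero_mul, expChar]

lemma coe_hilbert (f : smoothPeriodic) : (hilbert f : ℝ → ℂ) = HilbT f := rfl

lemma integralL_mul_projNeg (f g : smoothPeriodic) :
    integralL (f * projNeg g) = integralL (projPos f * g) :=
  fourierMult_adjoint (fun n => by split_ifs <;> simp) f.2 g.2

/-- The operator `i P₋ ∂ₓ`. -/
noncomputable def matsunoOp : smoothPeriodic →ₗ[ℂ] smoothPeriodic :=
  Complex.I • projNeg ∘ₗ derivL

/-- The transpose `-i ∂ₓ P₊` of `i P₋ ∂ₓ`. -/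
noncomputable def matsunoOpAdj : smoothPeriodic →ₗ[ℂ] smoothPeriodic :=
  -Complex.I • derivL ∘ₗ projPos

lemma integralL_mul_matsunoOp (f g : smoothPeriodic) :
    integralL (f * matsunoOp g) = integralL (matsunoOpAdj f * g) := by
  simp only [matsunoOp, matsunoOpAdj, LinearMap.smul_apply, LinearMap.comp_apply,
    mul_smul_comm, smul_mul_assoc, map_smul, integralL_mul_projNeg, integralL_derivL_mul]
  simp

lemma integralL_matsunoOp (f : smoothPeriodic) : integralL (matsunoOp f) = 0 := by
  rw [integralL_eq, matsunoOp, LinearMap.smul_apply, fourierCoef_coe_smul, LinearMap.comp_apply,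
    projNeg, fourierCoef_multL]
  simp

/-- The operator `(a + b H) ∂ₓ^j` on smooth periodic functions. -/
noncomputable def lamL (a b : ℂ) (j : ℕ) (u : smoothPeriodic) : smoothPeriodic :=
  a • derivL^[j] u + b • hilbert (derivL^[j] u)

lemma coe_lamL (a b : ℂ) (j : ℕ) (u : smoothPeriodic) :
    (lamL a b j u : ℝ → ℂ) = Lam a b j u := by
  funext x
  rw [Lam, ← coe_iterate_derivL, ← coe_hilbert]
  rfl

lemma lamL_one_zero (u : smoothPeriodic) : lamL 1 0 0 u = u := by simp [lamL]

lemma smul_lamL (c a b : ℂ) (j : ℕ) (u : smoothPeriodic) :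
    c • lamL a b j u = lamL (c * a) (c * b) j u := by
  simp only [lamL, smul_add, mul_smul]

lemma fourierCoef_lamL (a b : ℂ) (j : ℕ) (u : smoothPeriodic) (n : ℤ) :
    fourierCoef (lamL a b j u) n =
      (a + b * (-Complex.I * (n.sign : ℂ))) * (Complex.I * n) ^ j * fourierCoef u n := by
  rw [lamL, fourierCoef_coe_add, fourierCoef_coe_smul, fourierCoef_coe_smul, hilbert,
    fourierCoef_multL, fourierCoef_iterate_derivL]
  ring

lemma matsunoOp_lamL (a b : ℂ) (j : ℕ) (u : smoothPeriodic) :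
    matsunoOp (lamL a b j u) =
      lamL (Complex.I * (a + Complex.I * b) / 2) ((a + Complex.I * b) / 2) (j + 1) u := by
  refine ext_fourierCoef fun n => ?_
  rw [matsunoOp, LinearMap.smul_apply, fourierCoef_coe_smul, LinearMap.comp_apply, projNeg,
    fourierCoef_multL, fourierCoef_derivL, fourierCoef_lamL, fourierCoef_lamL]
  rcases lt_trichotomy n 0 with h | h | h
  · simp only [h, if_true, Int.sign_eq_neg_one_of_neg h]
    push_cast
    ring
  · simp [h]
  · simp only [h.not_gt, if_false, Int.sign_eq_one_of_pos h]
    push_cast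
    ring

lemma matsunoOpAdj_lamL (a b : ℂ) (j : ℕ) (u : smoothPeriodic) :
    matsunoOpAdj (lamL a b j u) =
      lamL (-Complex.I * (a - Complex.I * b) / 2) ((a - Complex.I * b) / 2) (j + 1) u := by
  refine ext_fourierCoef fun n => ?_
  rw [matsunoOpAdj, LinearMap.smul_apply, fourierCoef_coe_smul, LinearMap.comp_apply, projPos,
    fourierCoef_derivL, fourierCoef_multL, fourierCoef_lamL, fourierCoef_lamL]
  rcases lt_trichotomy n 0 with h | h | h
  · simp only [neg_lt_zero, h.not_gt, if_false, Int.sign_eq_neg_one_of_neg h]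
    push_cast
    ring
  · simp [h]
  · simp only [neg_lt_zero, h, if_true, Int.sign_eq_one_of_pos h]
    push_cast
    ring

end smoothPeriodic

/-- The compositions of `n` into `k` positive parts. -/
abbrev posTuples (k n : ℕ) : Finset (Fin k → ℕ) :=
  (Finset.Nat.antidiagonalTuple k n).filter fun j => ∀ i, 1 ≤ j i

lemma lt_of_mem_posTuples {k n : ℕ} (hk : 2 ≤ k) {j : Fin k → ℕ} (hj : j ∈ posTuples k n)
    (i : Fin k) : j i < n := by
  obtain ⟨hs, hp⟩ := Finset.mem_filter.1 hj
  rw [Finset.Nat.mem_antidiagonalTuple] at hs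
  have : Nontrivial (Fin k) := Fin.nontrivial_iff_two_le.2 hk
  obtain ⟨l, hl⟩ := exists_ne i
  have h := Finset.add_le_sum (f := j) (fun _ _ => Nat.zero_le _) (Finset.mem_univ i)
    (Finset.mem_univ l) hl.symm
  have := hp l
  omega

lemma matsunoW_one (u : ℝ → ℂ) : matsunoW u 1 = u := by
  rw [matsunoW, Nat.strongRecOn_eq]
  simp

lemma matsunoW_zero (u : ℝ → ℂ) : matsunoW u 0 = fun _ => 0 := by
  rw [matsunoW, Nat.strongRecOn_eq]
  simp

lemma matsunoW_add_two (u : ℝ → ℂ) (n : ℕ) (x : ℝ) :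
    matsunoW u (n + 2) x = Complex.I * Pminus (deriv (matsunoW u (n + 1))) x -
      ∑ k ∈ Finset.Icc 2 (n + 2), ((-1 : ℂ) ^ (k + 1) / (Nat.factorial k : ℂ)) *
        ∑ j ∈ posTuples k (n + 2), ∏ i, matsunoW u (j i) x := by
  conv_lhs => rw [matsunoW, Nat.strongRecOn_eq]
  rw [if_neg (by omega), if_neg (by omega)]
  congr 1
  · simp [matsunoW]
  · refine Finset.sum_congr rfl fun k hk => ?_
    congr 1
    refine Finset.sum_congr rfl fun j hj => Finset.prod_congr rfl fun i _ => ?_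
    beta_reduce
    rw [dif_pos (lt_of_mem_posTuples (Finset.mem_Icc.1 hk).1 hj i)]
    rfl

section matsunoPoly

open Polynomial smoothPeriodic

/-- Apply a linear map to each coefficient of a polynomial. -/
noncomputable def coeffMap (T : smoothPeriodic →ₗ[ℂ] smoothPeriodic) (p : smoothPeriodic[X]) :
    smoothPeriodic[X] :=
  ∑ k ∈ p.support, monomial k (T (p.coeff k))

lemma coeff_coeffMap (T : smoothPeriodic →ₗ[ℂ] smoothPeriodic) (p : smoothPeriodic[X]) (k : ℕ) :
    (coeffMap T p).coeff k = T (p.coeff k) := by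
  simp only [coeffMap, finsetSum_coeff, coeff_monomial, Finset.sum_ite_eq']
  split_ifs with h
  · rfl
  · rw [notMem_support_iff.1 h, map_zero]

lemma eval_coeffMap (T : smoothPeriodic →ₗ[ℂ] smoothPeriodic) (p : smoothPeriodic[X]) (t : ℂ) :
    (coeffMap T p).eval (algebraMap ℂ _ t) = T (p.eval (algebraMap ℂ _ t)) := by
  rw [coeffMap, eval_finsetSum, eval_eq_sum (p := p), sum_def, map_sum]
  refine Finset.sum_congr rfl fun k _ => ?_
  rw [eval_monomial, ← map_pow, mul_comm, mul_comm (p.coeff k), ← Algebra.smul_def,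
    ← Algebra.smul_def, map_smul]

/-- The Matsuno density `wₙ(tu)` as a polynomial in `t`. -/
noncomputable def matsunoPoly (u : smoothPeriodic) (n : ℕ) : smoothPeriodic[X] :=
  Nat.strongRecOn n fun n prev =>
    if n = 0 then 0
    else if n = 1 then C u * X
    else
      let W : ℕ → smoothPeriodic[X] := fun m => if hm : m < n then prev m hm else 0
      coeffMap matsunoOp (W (n - 1)) -
        ∑ k ∈ Finset.Icc 2 n, ((-1 : ℂ) ^ (k + 1) / (Nat.factorial k : ℂ)) •
          ∑ j ∈ posTuples k n, ∏ i, W (j i)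

lemma matsunoPoly_zero (u : smoothPeriodic) : matsunoPoly u 0 = 0 := by
  rw [matsunoPoly, Nat.strongRecOn_eq, if_pos rfl]

lemma matsunoPoly_one (u : smoothPeriodic) : matsunoPoly u 1 = C u * X := by
  rw [matsunoPoly, Nat.strongRecOn_eq, if_neg one_ne_zero, if_pos rfl]

lemma matsunoPoly_add_two (u : smoothPeriodic) (n : ℕ) :
    matsunoPoly u (n + 2) = coeffMap matsunoOp (matsunoPoly u (n + 1)) -
      ∑ k ∈ Finset.Icc 2 (n + 2), ((-1 : ℂ) ^ (k + 1) / (Nat.factorial k : ℂ)) •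
        ∑ j ∈ posTuples k (n + 2), ∏ i, matsunoPoly u (j i) := by
  conv_lhs => rw [matsunoPoly, Nat.strongRecOn_eq]
  rw [if_neg (by omega), if_neg (by omega)]
  refine congrArg₂ (· - ·) ?_ (Finset.sum_congr rfl fun k hk => congrArg (_ • ·)
    (Finset.sum_congr rfl fun j hj => Finset.prod_congr rfl fun i _ => ?_))
  · beta_reduce
    rw [dif_pos (by omega)]
    rfl
  · beta_reduce
    rw [dif_pos (lt_of_mem_posTuples (Finset.mem_Icc.1 hk).1 hj i)]
    rfl

lemma coe_eval_matsunoPoly (u : smoothPeriodic) (t : ℂ) (n : ℕ) :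
    ((matsunoPoly u n).eval (algebraMap ℂ smoothPeriodic t) : smoothPeriodic) =
      matsunoW (fun x => t * (u : ℝ → ℂ) x) n := by
  induction n using Nat.strong_induction_on with
  | _ n ih =>
    match n with
    | 0 => rw [matsunoPoly_zero, matsunoW_zero, eval_zero]; rfl
    | 1 =>
      rw [matsunoPoly_one, matsunoW_one, eval_mul, eval_C, eval_X, mul_comm, ← Algebra.smul_def]
      rfl
    | n + 2 =>
      funext x
      have hsmul (c : ℂ) (p : smoothPeriodic[X]) :
          (c • p).eval (algebraMap ℂ _ t) = c • p.eval (algebraMap ℂ _ t) := by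
        rw [eval_smul]
      rw [matsunoPoly_add_two, matsunoW_add_two, eval_sub, eval_coeffMap, eval_finsetSum]
      simp only [hsmul, eval_finsetSum, eval_prod]
      rw [← ih (n + 1) (by omega), ← coe_derivL, ← coe_projNeg]
      push_cast
      simp only [Pi.sub_apply, Finset.sum_apply, Pi.smul_apply, Finset.prod_apply, smul_eq_mul]
      congr 1
      refine Finset.sum_congr rfl fun k hk => ?_
      congr 1
      refine Finset.sum_congr rfl fun j hj => Finset.prod_congr rfl fun i _ => ?_
      rw [ih _ (lt_of_mem_posTuples (Finset.mem_Icc.1 hk).1 hj i)]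

lemma iteratedDeriv_eval_zero (q : ℂ[X]) (k : ℕ) :
    iteratedDeriv k (fun t : ℝ => q.eval (t : ℂ)) 0 = (Nat.factorial k : ℂ) * q.coeff k := by
  have h (k : ℕ) : iteratedDeriv k (fun t : ℝ => q.eval (t : ℂ)) =
      fun t : ℝ => (derivative^[k] q).eval (t : ℂ) := by
    induction k with
    | zero => simp
    | succ k ih =>
      rw [iteratedDeriv_succ, ih, Function.iterate_succ_apply']
      exact funext fun t => ((derivative^[k] q).hasDerivAt (t : ℂ)).comp_ofReal.deriv
  rw [h]
  beta_reduce
  rw [Complex.ofReal_zero, ← coeff_zero_eq_eval_zero, coeff_iterate_derivative]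
  simp [Nat.descFactorial_self]

lemma wCub_eq (u : smoothPeriodic) (n : ℕ) (x : ℝ) :
    wCub u n x = ((matsunoPoly u n).coeff 3 : ℝ → ℂ) x := by
  let ev : smoothPeriodic →+* ℂ :=
    (Pi.evalRingHom (fun _ : ℝ => ℂ) x).comp (smoothPeriodic.val : smoothPeriodic →+* (ℝ → ℂ))
  have h (t : ℝ) : matsunoW (fun y => (t : ℂ) * (u : ℝ → ℂ) y) n x =
      ((matsunoPoly u n).map ev).eval (t : ℂ) := by
    rw [← coe_eval_matsunoPoly]
    exact (eval_map_apply (f := ev) (p := matsunoPoly u n) (algebraMap ℂ _ (t : ℂ))).symm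
  simp only [wCub, h, iteratedDeriv_eval_zero, coeff_map]
  norm_num [Nat.factorial]
  rfl

lemma X_dvd_matsunoPoly (u : smoothPeriodic) (n : ℕ) : X ∣ matsunoPoly u n := by
  induction n using Nat.strong_induction_on with
  | _ n ih =>
    match n with
    | 0 => exact matsunoPoly_zero u ▸ dvd_zero _
    | 1 => exact matsunoPoly_one u ▸ dvd_mul_left _ _
    | n + 2 =>
      rw [X_dvd_iff, matsunoPoly_add_two, coeff_sub, coeff_coeffMap,
        X_dvd_iff.1 (ih _ (by omega)), map_zero, zero_sub, neg_eq_zero, finsetSum_coeff]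
      refine Finset.sum_eq_zero fun k hk => ?_
      have h2 := (Finset.mem_Icc.1 hk).1
      rw [coeff_smul, X_dvd_iff.1 (Finset.dvd_sum fun j hj => ?_), smul_zero]
      exact (ih _ (lt_of_mem_posTuples h2 hj ⟨0, by omega⟩)).trans
        (Finset.dvd_prod_of_mem _ (Finset.mem_univ _))

lemma coeff_zero_matsunoPoly (u : smoothPeriodic) (n : ℕ) : (matsunoPoly u n).coeff 0 = 0 :=
  X_dvd_iff.1 (X_dvd_matsunoPoly u n)

lemma coeff_prod_matsunoPoly_of_lt (u : smoothPeriodic) {m k : ℕ} (h : m < k) (j : Fin k → ℕ) :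
    (∏ i, matsunoPoly u (j i)).coeff m = 0 := by
  have := Finset.prod_dvd_prod_of_dvd (s := Finset.univ) (fun _ : Fin k => X)
    (fun i => matsunoPoly u (j i)) fun i _ => X_dvd_matsunoPoly u (j i)
  rw [Finset.prod_const, Finset.card_univ, Fintype.card_fin, X_pow_dvd_iff] at this
  exact this m h

lemma coeff_matsunoPoly_add_two (u : smoothPeriodic) (n m : ℕ) (s : Finset ℕ)
    (hs : s ⊆ Finset.Icc 2 (n + 2)) (hm : ∀ k ∈ Finset.Icc 2 (n + 2), k ∉ s → m < k) :
    (matsunoPoly u (n + 2)).coeff m = matsunoOp ((matsunoPoly u (n + 1)).coeff m) -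
      ∑ k ∈ s, ((-1 : ℂ) ^ (k + 1) / (Nat.factorial k : ℂ)) •
        ∑ j ∈ posTuples k (n + 2), (∏ i, matsunoPoly u (j i)).coeff m := by
  rw [matsunoPoly_add_two, coeff_sub, coeff_coeffMap, finsetSum_coeff]
  simp only [coeff_smul, finsetSum_coeff]
  rw [Finset.sum_subset hs]
  intro k hk hks
  rw [Finset.sum_eq_zero fun j _ => coeff_prod_matsunoPoly_of_lt u (hm k hk hks) j, smul_zero]

lemma coeff_one_matsunoPoly_add_two (u : smoothPeriodic) (n : ℕ) :
    (matsunoPoly u (n + 2)).coeff 1 = matsunoOp ((matsunoPoly u (n + 1)).coeff 1) := by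
  rw [coeff_matsunoPoly_add_two u n 1 ∅ (by simp) (by simp; omega)]
  simp

lemma coeff_two_matsunoPoly_add_two (u : smoothPeriodic) (n : ℕ) :
    (matsunoPoly u (n + 2)).coeff 2 = matsunoOp ((matsunoPoly u (n + 1)).coeff 2) +
      (1 / 2 : ℂ) • ∑ j ∈ posTuples 2 (n + 2),
        (matsunoPoly u (j 0)).coeff 1 * (matsunoPoly u (j 1)).coeff 1 := by
  rw [coeff_matsunoPoly_add_two u n 2 {2} (by simp) (by simp; omega), Finset.sum_singleton,
    sub_eq_add_neg, ← neg_smul]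
  congr 2
  · norm_num
  · refine Finset.sum_congr rfl fun j _ => ?_
    simp [Fin.prod_univ_two, coeff_mul, Finset.Nat.antidiagonal_succ, coeff_zero_matsunoPoly]

lemma coeff_three_matsunoPoly_add_three (u : smoothPeriodic) (n : ℕ) :
    (matsunoPoly u (n + 3)).coeff 3 = matsunoOp ((matsunoPoly u (n + 2)).coeff 3) +
      ((1 / 2 : ℂ) • ∑ j ∈ posTuples 2 (n + 3),
        ((matsunoPoly u (j 0)).coeff 1 * (matsunoPoly u (j 1)).coeff 2 +
          (matsunoPoly u (j 1)).coeff 1 * (matsunoPoly u (j 0)).coeff 2) +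
      (-1 / 6 : ℂ) • ∑ j ∈ posTuples 3 (n + 3),
        (matsunoPoly u (j 0)).coeff 1 * (matsunoPoly u (j 1)).coeff 1 *
          (matsunoPoly u (j 2)).coeff 1) := by
  rw [coeff_matsunoPoly_add_two u (n + 1) 3 {2, 3}
    (by intro k; simp; omega) (by intro k; simp; omega),
    Finset.sum_pair (by norm_num), sub_eq_add_neg, neg_add, ← neg_smul, ← neg_smul]
  congr 3
  · norm_num
  · refine Finset.sum_congr rfl fun j _ => ?_
    simp [Fin.prod_univ_two, coeff_mul, Finset.Nat.antidiagonal_succ, coeff_zero_matsunoPoly,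
      mul_comm]
  · norm_num [Nat.factorial]
  · refine Finset.sum_congr rfl fun j _ => ?_
    simp [Fin.prod_univ_three, coeff_mul, Finset.Nat.antidiagonal_succ, coeff_zero_matsunoPoly]

lemma coeff_one_matsunoPoly (n : ℕ) :
    ∃ a b, ∀ u, (matsunoPoly u (n + 1)).coeff 1 = lamL a b n u := by
  induction n with
  | zero => exact ⟨1, 0, fun u => by simp [matsunoPoly_one, lamL_one_zero]⟩
  | succ n ih =>
    obtain ⟨a, b, h⟩ := ih
    exact ⟨_, _, fun u => by rw [coeff_one_matsunoPoly_add_two, h, matsunoOp_lamL]⟩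

/-- The span of the cubic functionals `u ↦ ∫ ∏ᵣ (aᵣ + bᵣ H) ∂ₓ^{eᵣ} u` with `d` derivatives. -/
noncomputable def cubicForms (d : ℕ) : Submodule ℂ (smoothPeriodic → ℂ) :=
  Submodule.span ℂ {F | ∃ (e : Fin 3 → ℕ) (a b : Fin 3 → ℂ), e 0 + e 1 + e 2 = d ∧
    F = fun u => integralL (lamL (a 0) (b 0) (e 0) u * lamL (a 1) (b 1) (e 1) u *
      lamL (a 2) (b 2) (e 2) u)}

lemma integralL_lamL_mul_mem_cubicForms {d i j k : ℕ} (h : i + j + k = d)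
    (a₀ b₀ a₁ b₁ a₂ b₂ : ℂ) :
    (fun u => integralL (lamL a₀ b₀ i u * lamL a₁ b₁ j u * lamL a₂ b₂ k u)) ∈ cubicForms d :=
  Submodule.subset_span ⟨![i, j, k], ![a₀, a₁, a₂], ![b₀, b₁, b₂], h, rfl⟩

lemma exists_eq_sum_of_mem_cubicForms {d : ℕ} {F : smoothPeriodic → ℂ} (hF : F ∈ cubicForms d) :
    ∃ (N : ℕ) (e : ℕ → Fin 3 → ℕ) (a b : ℕ → Fin 3 → ℂ),
      (∀ i < N, e i 0 + e i 1 + e i 2 = d) ∧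
      ∀ u, F u = ∑ i ∈ Finset.range N, integralL (lamL (a i 0) (b i 0) (e i 0) u *
        lamL (a i 1) (b i 1) (e i 1) u * lamL (a i 2) (b i 2) (e i 2) u) := by
  induction hF using Submodule.span_induction with
  | mem F hF =>
    obtain ⟨e, a, b, he, rfl⟩ := hF
    exact ⟨1, fun _ => e, fun _ => a, fun _ => b, fun _ _ => he, fun u => by simp⟩
  | zero => exact ⟨0, 0, 0, 0, by simp, fun u => by simp⟩
  | add F G _ _ hF hG =>
    obtain ⟨N, e, a, b, he, h⟩ := hF
    obtain ⟨N', e', a', b', he', h'⟩ := hG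
    refine ⟨N + N', fun i => if i < N then e i else e' (i - N),
      fun i => if i < N then a i else a' (i - N), fun i => if i < N then b i else b' (i - N),
      fun i hi => ?_, fun u => ?_⟩
    · by_cases hN : i < N
      · simpa only [hN, if_true] using he i hN
      · simpa only [hN, if_false] using he' (i - N) (by omega)
    · rw [Pi.add_apply, h, h', Finset.sum_range_add]
      congr 1
      · refine Finset.sum_congr rfl fun i hi => ?_
        simp only [Finset.mem_range.1 hi, if_true]
      · refine Finset.sum_congr rfl fun i _ => ?_
        simp only [not_lt.2 (Nat.le_add_right N i), if_false, Nat.add_sub_cancel_left]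
  | smul c F _ hF =>
    obtain ⟨N, e, a, b, he, h⟩ := hF
    refine ⟨N, e, fun i => ![c * a i 0, a i 1, a i 2], fun i => ![c * b i 0, b i 1, b i 2],
      he, fun u => ?_⟩
    rw [Pi.smul_apply, h, Finset.smul_sum]
    refine Finset.sum_congr rfl fun i _ => ?_
    rw [← map_smul, ← smul_mul_assoc, ← smul_mul_assoc, smul_lamL]
    rfl

lemma exists_add_of_mem_posTuples {k n : ℕ} {j : Fin k → ℕ} (hj : j ∈ posTuples k n) (i : Fin k) :
    ∃ l, j i = l + 1 :=
  Nat.exists_eq_add_of_le' ((Finset.mem_filter.1 hj).2 i)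

lemma sum_of_mem_posTuples {k n : ℕ} {j : Fin k → ℕ} (hj : j ∈ posTuples k n) :
    ∑ i, j i = n :=
  Finset.Nat.mem_antidiagonalTuple.1 (Finset.mem_filter.1 hj).1

lemma integralL_lamL_mul_coeff_two_mem (n d e : ℕ) (h : d + 1 = e + n) (a b : ℂ) :
    (fun u => integralL (lamL a b e u * (matsunoPoly u (n + 1)).coeff 2)) ∈ cubicForms d := by
  induction n generalizing e a b with
  | zero =>
    have : (fun u => integralL (lamL a b e u * (matsunoPoly u (0 + 1)).coeff 2)) = 0 := by
      funext u
      simp [matsunoPoly_one]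
    rw [this]
    exact zero_mem _
  | succ n ih =>
    have key : (fun u => integralL (lamL a b e u * (matsunoPoly u (n + 1 + 1)).coeff 2)) =
        (fun u => integralL (matsunoOpAdj (lamL a b e u) * (matsunoPoly u (n + 1)).coeff 2)) +
        (1 / 2 : ℂ) • ∑ j ∈ posTuples 2 (n + 2), fun u => integralL (lamL a b e u *
          (matsunoPoly u (j 0)).coeff 1 * (matsunoPoly u (j 1)).coeff 1) := by
      funext u
      simp only [coeff_two_matsunoPoly_add_two, mul_add, map_add, integralL_mul_matsunoOp,
        mul_smul_comm, map_smul, Finset.mul_sum, map_sum, Pi.add_apply, Pi.smul_apply,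
        Finset.sum_apply, mul_assoc]
    rw [key]
    refine add_mem ?_ (Submodule.smul_mem _ _ (sum_mem fun j hj => ?_))
    · simp only [matsunoOpAdj_lamL]
      exact ih (e + 1) (by omega) _ _
    · obtain ⟨p, hp⟩ := exists_add_of_mem_posTuples hj 0
      obtain ⟨q, hq⟩ := exists_add_of_mem_posTuples hj 1
      have hs := sum_of_mem_posTuples hj
      rw [Fin.sum_univ_two] at hs
      obtain ⟨a₁, b₁, h₁⟩ := coeff_one_matsunoPoly p
      obtain ⟨a₂, b₂, h₂⟩ := coeff_one_matsunoPoly q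
      simp only [hp, hq, h₁, h₂]
      exact integralL_lamL_mul_mem_cubicForms (by omega) _ _ _ _ _ _

lemma integralL_coeff_one_mul_coeff_two_mem {p q d : ℕ} (hp : 1 ≤ p) (hq : 1 ≤ q)
    (h : p + q = d + 3) :
    (fun u => integralL ((matsunoPoly u p).coeff 1 * (matsunoPoly u q).coeff 2)) ∈
      cubicForms d := by
  obtain ⟨p, rfl⟩ := Nat.exists_eq_add_of_le' hp
  obtain ⟨q, rfl⟩ := Nat.exists_eq_add_of_le' hq
  obtain ⟨a, b, hab⟩ := coeff_one_matsunoPoly p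
  simp only [hab]
  exact integralL_lamL_mul_coeff_two_mem q d p (by omega) a b

lemma integralL_coeff_three_mem (d : ℕ) :
    (fun u => integralL ((matsunoPoly u (d + 3)).coeff 3)) ∈ cubicForms d := by
  have key : (fun u => integralL ((matsunoPoly u (d + 3)).coeff 3)) =
      ((1 / 2 : ℂ) • ∑ j ∈ posTuples 2 (d + 3),
        ((fun u => integralL ((matsunoPoly u (j 0)).coeff 1 * (matsunoPoly u (j 1)).coeff 2)) +
        fun u => integralL ((matsunoPoly u (j 1)).coeff 1 * (matsunoPoly u (j 0)).coeff 2)) +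
      (-1 / 6 : ℂ) • ∑ j ∈ posTuples 3 (d + 3), fun u =>
        integralL ((matsunoPoly u (j 0)).coeff 1 * (matsunoPoly u (j 1)).coeff 1 *
          (matsunoPoly u (j 2)).coeff 1)) := by
    funext u
    simp only [coeff_three_matsunoPoly_add_three, map_add, integralL_matsunoOp, zero_add,
      map_smul, map_sum, Pi.add_apply, Pi.smul_apply, Finset.sum_apply]
  rw [key]
  refine add_mem (Submodule.smul_mem _ _ (sum_mem fun j hj => ?_))
    (Submodule.smul_mem _ _ (sum_mem fun j hj => ?_))
  · have hs := sum_of_mem_posTuples hj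
    rw [Fin.sum_univ_two] at hs
    have hp := (Finset.mem_filter.1 hj).2
    exact add_mem (integralL_coeff_one_mul_coeff_two_mem (hp 0) (hp 1) hs)
      (integralL_coeff_one_mul_coeff_two_mem (hp 1) (hp 0) ((add_comm _ _).trans hs))
  · have hs := sum_of_mem_posTuples hj
    rw [Fin.sum_univ_three] at hs
    obtain ⟨p, hp⟩ := exists_add_of_mem_posTuples hj 0
    obtain ⟨q, hq⟩ := exists_add_of_mem_posTuples hj 1
    obtain ⟨r, hr⟩ := exists_add_of_mem_posTuples hj 2
    obtain ⟨a₀, b₀, h₀⟩ := coeff_one_matsunoPoly p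
    obtain ⟨a₁, b₁, h₁⟩ := coeff_one_matsunoPoly q
    obtain ⟨a₂, b₂, h₂⟩ := coeff_one_matsunoPoly r
    simp only [hp, hq, hr, h₀, h₁, h₂]
    exact integralL_lamL_mul_mem_cubicForms (by omega) _ _ _ _ _ _

end matsunoPoly

/-- for every `n ≥ 3` there are a finite index set `I` and, for `i ∈ I`,
exponents `e_i : Fin 3 → ℕ` with `e_i 0 + e_i 1 + e_i 2 = n − 3` and constants
`a_i, b_i : Fin 3 → ℂ` such that for every smooth `2π`-periodic zero-mean `u`:
`∫₀^{2π} w_n^C(u) dx = Σ_{i∈I} ∫₀^{2π} ∏_{r<3} ((a_i r + b_i r·H)∂ₓ^{e_i r} u) dx`. -/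
theorem stmt_16 (n : ℕ) (hn : 3 ≤ n) :
    ∃ (I : Finset ℕ) (e : ℕ → Fin 3 → ℕ) (a b : ℕ → Fin 3 → ℂ),
      (∀ i ∈ I, e i 0 + e i 1 + e i 2 = n - 3) ∧
      ∀ u : ℝ → ℂ, ContDiff ℝ (⊤ : ℕ∞) u → (∀ x, u (x + 2 * Real.pi) = u x) →
        (∫ x in (0:ℝ)..(2 * Real.pi), u x) = 0 →
        (∫ x in (0:ℝ)..(2 * Real.pi), wCub u n x)
          = ∑ i ∈ I, ∫ x in (0:ℝ)..(2 * Real.pi),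
              Lam (a i 0) (b i 0) (e i 0) u x * Lam (a i 1) (b i 1) (e i 1) u x *
                Lam (a i 2) (b i 2) (e i 2) u x := by
  obtain ⟨d, rfl⟩ := Nat.exists_eq_add_of_le' hn
  obtain ⟨N, e, a, b, he, h⟩ := exists_eq_sum_of_mem_cubicForms (integralL_coeff_three_mem d)
  refine ⟨Finset.range N, e, a, b, fun i hi => he i (Finset.mem_range.1 hi), ?_⟩
  intro u hu hper _
  have hU := h ⟨u, hu, hper⟩
  simp only [smoothPeriodic.integralL_apply, ← wCub_eq] at hU
  rw [hU]
  refine Finset.sum_congr rfl fun i _ => ?_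
  simp only [MulMemClass.coe_mul, smoothPeriodic.coe_lamL, Pi.mul_apply]
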